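/- arXiv:2604.25461 — 4 statements merged into one kernel-verified Lean document; each statement's English description precedes it below -/
import Mathlib

section
/- Let q = p^n be a prime power with q ≥ 3, let r ≥ 2 be an integer, and let k = (q^r − 1)/(q − 1). Then for every 0 ≤ a ≤ q−2 and 0 ≤ b ≤ q−2, the cyclotomic number (a,b)_{q−1} over 𝔽_{q^r} satisfies (a,b)_{q−1} ≤ ⌈k/2⌉. -/
/-- `x` lies in the cyclotomic coset `C_a = ω^a ⟨ω^e⟩` of `Fˣ`. -/
def InCycCoset {F : Type*} [Field F] (ω : Fˣ) (e a : ℕ) (x : Fˣ) : Prop :=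
  ∃ m : ℕ, x = ω ^ a * (ω ^ e) ^ m

/-- The cyclotomic number `(a,b)_e` : the number of `x ∈ C_a` with `x + 1 ∈ C_b`. -/
noncomputable def cycNum {F : Type*} [Field F] (ω : Fˣ) (e a b : ℕ) : ℕ :=
  Nat.card {x : Fˣ | InCycCoset ω e a x ∧ ∃ y : Fˣ, InCycCoset ω e b y ∧ (y : F) = (x : F) + 1}

/-!
If `x ^ k = α` and `(x + 1) ^ k = β`, then `x` is a *double* root of
`β X ^ (k + 1) - α (X + 1) ^ (k + 1) + α β`: its value there is `α β x - α β (x + 1) + α β = 0`, and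
its derivative there is `(k + 1) (β α - α β) = 0`. Hence there are at most `(k + 1) / 2` such `x`
unless this polynomial vanishes identically. Its coefficients strictly between the constant and the
leading one are `-α * (k + 1).choose j`, and by Lucas' theorem they vanish simultaneously only if
`k + 1` is a power of the characteristic. For `k = 1 + q + ⋯ + q ^ (r - 1)` with `r ≥ 2` we have
`q < k + 1 ≡ 2 (mod q)`, so `k + 1` can be a power of the characteristic only if `q ∣ 2`.
-/

open Polynomial

theorem exists_natCast_choose_ne_zero (R : Type*) [AddMonoidWithOne R] (p : ℕ) [ExpChar R p] {n : ℕ}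
    (hn : n ≠ 0) (hnp : ∀ m, n ≠ p ^ m) : ∃ j, 0 < j ∧ j < n ∧ (n.choose j : R) ≠ 0 := by
  obtain _ | hp := ‹ExpChar R p›
  · have hn1 : n ≠ 1 := by simpa using hnp 0
    exact ⟨1, one_pos, by lia, by simpa using hn⟩
  · have : Fact p.Prime := ⟨hp⟩
    by_contra! hzero
    refine hnp _ (Choose.eq_pow_multiplicity_of_choose_modEq_zero_nat (by lia) fun j hj ↦ ?_)
    rw [Finset.mem_Icc] at hj
    rw [Nat.modEq_zero_iff_dvd, ← CharP.cast_eq_zero_iff R p]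
    exact hzero j (by lia) (by lia)

theorem geomSum_add_one_ne_pow {p n r : ℕ} (hq : 3 ≤ p ^ n) (hr : 2 ≤ r) (m : ℕ) :
    ∑ i ∈ Finset.range r, (p ^ n) ^ i + 1 ≠ p ^ m := by
  intro hpow
  obtain ⟨s, rfl⟩ := Nat.exists_eq_add_of_le' hr
  have hsum : ∑ i ∈ Finset.range (s + 2), (p ^ n) ^ i + 1 =
      p ^ n * ∑ i ∈ Finset.range (s + 1), (p ^ n) ^ i + 2 := by
    rw [Finset.sum_range_succ', Finset.mul_sum]
    simp only [pow_succ', pow_zero, add_assoc, Nat.reduceAdd]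
  have hpos : 0 < ∑ i ∈ Finset.range (s + 1), (p ^ n) ^ i := by
    simp [Finset.sum_range_succ']
  have hlt : p ^ n < p ^ m := by nlinarith
  have hdvd : p ^ n ∣ p ^ m := by
    rcases le_total n m with hnm | hmn
    · exact pow_dvd_pow p hnm
    · exact absurd (Nat.le_of_dvd (by lia) (pow_dvd_pow p hmn)) (by lia)
  rw [← hpow, hsum, Nat.dvd_add_right (dvd_mul_right _ _)] at hdvd
  exact absurd (Nat.le_of_dvd two_pos hdvd) (by lia)

section CommRing

variable {R : Type*} [CommRing R]

theorem two_mul_ncard_isRoot_derivative_isRoot_le_natDegree [IsDomain R] {P : R[X]} (hP : P ≠ 0) :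
    2 * {x | P.IsRoot x ∧ P.derivative.IsRoot x}.ncard ≤ P.natDegree := by
  classical
  have hfin : {x | P.IsRoot x ∧ P.derivative.IsRoot x}.Finite :=
    (finite_setOfPred_isRoot hP).subset fun _ hx ↦ hx.1
  have hle : 2 • hfin.toFinset.val ≤ P.roots := Multiset.le_iff_count.2 fun x ↦ by
    by_cases hx : x ∈ hfin.toFinset
    · rw [Multiset.count_nsmul, Multiset.count_eq_one_of_mem hfin.toFinset.nodup hx, count_roots]
      exact (one_lt_rootMultiplicity_iff_isRoot hP).2 (hfin.mem_toFinset.1 hx)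
    · rw [Multiset.count_nsmul, Multiset.count_eq_zero_of_notMem hx, mul_zero]
      exact Nat.zero_le _
  calc 2 * {x | P.IsRoot x ∧ P.derivative.IsRoot x}.ncard
      = (2 • hfin.toFinset.val).card := by
        rw [Set.ncard_eq_toFinset_card _ hfin, Multiset.card_nsmul, Finset.card_val]
    _ ≤ P.roots.card := Multiset.card_le_card hle
    _ ≤ P.natDegree := card_roots' P

/-- The polynomial `β X ^ (k + 1) - α (X + 1) ^ (k + 1) + α β`, which has a double root at every
common solution of `x ^ k = α` and `(x + 1) ^ k = β`. -/
noncomputable def powPairPoly (k : ℕ) (α β : R) : R[X] :=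
  C β * X ^ (k + 1) - C α * (X + 1) ^ (k + 1) + C (α * β)

namespace powPairPoly

theorem natDegree_le (k : ℕ) (α β : R) : (powPairPoly k α β).natDegree ≤ k + 1 := by
  unfold powPairPoly
  compute_degree

theorem isRoot {k : ℕ} {α β x : R} (hx : x ^ k = α) (hx1 : (x + 1) ^ k = β) :
    (powPairPoly k α β).IsRoot x := by
  simp only [powPairPoly, IsRoot.def, eval_add, eval_sub, eval_mul, eval_C, eval_pow, eval_X,
    eval_one, pow_succ, hx, hx1]
  ring

theorem derivative_eq (k : ℕ) (α β : R) :
    (powPairPoly k α β).derivative = C (k + 1 : R) * (C β * X ^ k - C α * (X + 1) ^ k) := by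
  simp only [powPairPoly, derivative_add, derivative_sub, derivative_C_mul, derivative_pow,
    derivative_X, derivative_one, derivative_C, Nat.add_sub_cancel, Nat.cast_succ]
  ring

theorem derivative_isRoot {k : ℕ} {α β x : R} (hx : x ^ k = α) (hx1 : (x + 1) ^ k = β) :
    (powPairPoly k α β).derivative.IsRoot x := by
  rw [derivative_eq, IsRoot.def]
  simp only [eval_sub, eval_mul, eval_C, eval_pow, eval_add, eval_X, eval_one, hx, hx1]
  ring

theorem coeff_of_pos_of_le {j k : ℕ} (hj : 0 < j) (hjk : j ≤ k) (α β : R) :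
    (powPairPoly k α β).coeff j = -(α * (k + 1).choose j) := by
  simp [powPairPoly, coeff_X_pow, coeff_X_add_one_pow, coeff_C, hj.ne', (by lia : j ≠ k + 1)]

theorem ne_zero [IsDomain R] (p : ℕ) [ExpChar R p] {k : ℕ} (hk : ∀ m, k + 1 ≠ p ^ m)
    {α : R} (hα : α ≠ 0) (β : R) : powPairPoly k α β ≠ 0 := by
  obtain ⟨j, hj, hjk, hchoose⟩ := exists_natCast_choose_ne_zero R p k.succ_ne_zero hk
  intro hzero
  have hcoeff := coeff_of_pos_of_le hj (Nat.le_of_lt_succ hjk) α β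
  rw [hzero, coeff_zero, eq_comm, neg_eq_zero] at hcoeff
  exact mul_ne_zero hα hchoose hcoeff

end powPairPoly

variable [IsDomain R]

theorem finite_setOf_pow_eq {k : ℕ} (hk : 0 < k) (α : R) : {x : R | x ^ k = α}.Finite := by
  simpa [sub_eq_zero] using finite_setOfPred_isRoot (X_pow_sub_C_ne_zero hk α)

theorem ncard_pow_eq_add_one_pow_eq_le (p : ℕ) [ExpChar R p] {k : ℕ} (hk : ∀ m, k + 1 ≠ p ^ m)
    {α : R} (hα : α ≠ 0) (β : R) :
    {x : R | x ^ k = α ∧ (x + 1) ^ k = β}.ncard ≤ (k + 1) / 2 := by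
  have hP := powPairPoly.ne_zero p hk hα β
  have hsub : {x : R | x ^ k = α ∧ (x + 1) ^ k = β} ⊆
      {x | (powPairPoly k α β).IsRoot x ∧ (powPairPoly k α β).derivative.IsRoot x} :=
    fun _ ⟨hx, hx1⟩ ↦ ⟨powPairPoly.isRoot hx hx1, powPairPoly.derivative_isRoot hx hx1⟩
  have hcard := Set.ncard_le_ncard hsub
    ((finite_setOfPred_isRoot hP).subset fun _ hx ↦ hx.1)
  have hdouble := two_mul_ncard_isRoot_derivative_isRoot_le_natDegree hP
  have hdeg := powPairPoly.natDegree_le k α β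
  lia

end CommRing

theorem InCycCoset.pow_eq {F : Type*} [Field F] {ω : Fˣ} {e k a : ℕ} {x : Fˣ}
    (hx : InCycCoset ω e a x) (hω : ω ^ (e * k) = 1) : x ^ k = (ω ^ a) ^ k := by
  obtain ⟨m, rfl⟩ := hx
  rw [mul_pow, pow_right_comm (ω ^ e), ← pow_mul ω e k, hω, one_pow, mul_one]

theorem cycNum_le_ncard {F : Type*} [Field F] {ω : Fˣ} {e k : ℕ} (hk : 0 < k)
    (hω : ω ^ (e * k) = 1) (a b : ℕ) :
    cycNum ω e a b ≤
      {x : F | x ^ k = ((ω ^ a) ^ k : Fˣ) ∧ (x + 1) ^ k = ((ω ^ b) ^ k : Fˣ)}.ncard := by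
  refine Set.ncard_le_ncard_of_injOn Units.val ?_ Units.val_injective.injOn
    ((finite_setOf_pow_eq hk _).subset fun _ hx ↦ hx.1)
  rintro x ⟨hxa, y, hyb, hyx⟩
  rw [Set.mem_ofPred_eq, ← hyx, ← hxa.pow_eq hω, ← hyb.pow_eq hω]
  exact ⟨(Units.val_pow_eq_pow_val x k).symm, (Units.val_pow_eq_pow_val y k).symm⟩

theorem cycNum_le_ceil_half_k_general {F : Type*} [Field F] (p : ℕ) [ExpChar F p] {e k : ℕ}
    (hk : ∀ m, k + 1 ≠ p ^ m) {ω : Fˣ} (hω : ω ^ (e * k) = 1) (a b : ℕ) :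
    cycNum ω e a b ≤ (k + 1) / 2 := by
  have hk0 : k ≠ 0 := by simpa using hk 0
  exact (cycNum_le_ncard hk0.pos hω a b).trans
    (ncard_pow_eq_add_one_pow_eq_le p hk (Units.ne_zero _) _)

/-- If `q = p^n ≥ 3` is a prime power, `r ≥ 2`, and `k = (q^r - 1)/(q - 1)`, then every
cyclotomic number `(a,b)_{q-1}` over `𝔽_{q^r}` is at most `⌈k/2⌉`. -/
theorem cycNum_le_ceil_half_k {p n q r k : ℕ} (hp : p.Prime) (hn : 1 ≤ n) (hq : q = p ^ n)
    (hq3 : 3 ≤ q) (hr : 2 ≤ r) (hk : k = (q ^ r - 1) / (q - 1))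
    {F : Type*} [Field F] [Fintype F] (hF : Fintype.card F = q ^ r)
    (ω : Fˣ) (hω : ∀ x : Fˣ, x ∈ Subgroup.zpowers ω)
    (a b : ℕ) (ha : a ≤ q - 2) (hb : b ≤ q - 2) :
    cycNum ω (q - 1) a b ≤ (k + 1) / 2 := by
  subst hq hk
  have : Fact p.Prime := ⟨hp⟩
  have : CharP F p := charP_of_card_eq_prime_pow (f := n * r) (by rw [hF, pow_mul])
  refine cycNum_le_ceil_half_k_general p (fun m ↦ ?_) ?_ a b
  · rw [← Nat.geomSum_eq (by lia)]
    exact geomSum_add_one_ne_pow hq3 hr m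
  · rw [Nat.mul_div_cancel' (by simpa using Nat.sub_dvd_pow_sub_pow (p ^ n) 1 r), ← hF,
      ← Nat.card_eq_fintype_card, ← Nat.card_units, pow_card_eq_one']
end

section
/- Let q = p^n be a prime power, r ≥ 2 an integer, k = (q^r − 1)/(q − 1), and 0 ≤ a,b ≤ q−2. Then (a,b)_{q−1} = (1/(q−1)^2) · Σ_{χ,ψ} χ(ω^{−ak}) ψ(ω^{−bk}) J_{𝔽_{q^r}}(χ∘N, ψ∘N), where the sum runs over all pairs of multiplicative characters χ, ψ of 𝔽_q^× and N = N_{𝔽_{q^r}/𝔽_q} is the field norm. -/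
/-!
The norm `N : Fˣ → Kˣ` is onto, so `N ω` generates `Kˣ` and has order `q - 1`. Hence the coset
`C_a = ω ^ a ⟨ω ^ (q - 1)⟩` is the fibre of `N` over `N ω ^ a`, and `(a,b)_{q-1}` counts the `x`
with `N x = N ω ^ a` and `N (x + 1) = N ω ^ b`. Orthogonality of the characters of `K`, applied to
each of the two conditions, expresses this count as a double character sum.
-/

section MulCharOrthogonality

variable {M R : Type*} [CommMonoid M] [Finite M] [CommRing R]
  [HasEnoughRootsOfUnity R (Monoid.exponent Mˣ)] [Fintype (MulChar M R)]

theorem sum_mulChar_apply_one : ∑ χ : MulChar M R, χ 1 = (Nat.card Mˣ : R) := by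
  simp only [map_one, Finset.sum_const, Finset.card_univ, nsmul_eq_mul, mul_one,
    ← MulChar.card_eq_card_units_of_hasEnoughRootsOfUnity M R, Nat.card_eq_fintype_card]

variable [IsDomain R]

theorem sum_mulChar_apply_eq_zero {m : M} (hm : m ≠ 1) : ∑ χ : MulChar M R, χ m = 0 := by
  obtain ⟨χ, hχ⟩ := MulChar.exists_apply_ne_one_of_hasEnoughRootsOfUnity M R hm
  refine eq_zero_of_mul_eq_self_left hχ ?_
  simp only [Finset.mul_sum, ← MulChar.mul_apply]
  exact (Group.mulLeft_bijective χ).sum_comp fun ψ : MulChar M R ↦ ψ m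

theorem sum_mulChar_inv_mul_apply [DecidableEq M] (u : Mˣ) (m : M) :
    ∑ χ : MulChar M R, χ ↑u⁻¹ * χ m = if m = u then (Nat.card Mˣ : R) else 0 := by
  simp only [← map_mul]
  split_ifs with hm
  · rw [hm, Units.inv_mul, sum_mulChar_apply_one]
  · exact sum_mulChar_apply_eq_zero (mt (Units.inv_mul_eq_one (u := u)).mp (Ne.symm hm))

theorem sum_sum_mulChar_inv_mul_sum_eq_card {X : Type*} [Fintype X] (f g : X → M) (u v : Mˣ) :
    ∑ χ : MulChar M R, ∑ ψ : MulChar M R, χ ↑u⁻¹ * ψ ↑v⁻¹ * ∑ x, χ (f x) * ψ (g x) =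
      (Nat.card Mˣ : R) ^ 2 * Nat.card {x // f x = u ∧ g x = v} := by
  classical
  calc
    _ = ∑ x, (∑ χ : MulChar M R, χ ↑u⁻¹ * χ (f x)) * ∑ ψ : MulChar M R, ψ ↑v⁻¹ * ψ (g x) := by
      simp_rw [Fintype.sum_mul_sum, Finset.mul_sum, mul_mul_mul_comm]
      rw [Finset.sum_comm_cycle]
    _ = ∑ x, if f x = u ∧ g x = v then (Nat.card Mˣ : R) ^ 2 else 0 := by
      simp only [sum_mulChar_inv_mul_apply, ite_zero_mul_ite_zero, sq]
    _ = _ := by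
      rw [← Finset.sum_filter, Finset.sum_const, nsmul_eq_mul, mul_comm,
        Nat.subtype_card {x | f x = u ∧ g x = v} (by simp)]

end MulCharOrthogonality

theorem natCast_card_ne_zero_of_hasEnoughRootsOfUnity (G R : Type*) [CommGroup G] [Finite G]
    [CommRing R] [IsDomain R] [HasEnoughRootsOfUnity R (Monoid.exponent G)] :
    (Nat.card G : R) ≠ 0 := by
  obtain ⟨ξ, hξ⟩ := HasEnoughRootsOfUnity.exists_primitiveRoot R (Monoid.exponent G)
  have exponent_ne_zero : (Monoid.exponent G : R) ≠ 0 := hξ.neZero'.out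
  have card_dvd : (Nat.card G : R) ∣ (Monoid.exponent G : R) ^ Group.rank G := by
    exact_mod_cast Nat.cast_dvd_cast (α := R) (card_dvd_exponent_pow_rank G)
  exact ne_zero_of_dvd_ne_zero (pow_ne_zero _ exponent_ne_zero) card_dvd

theorem exists_eq_pow_mul_pow_orderOf_iff_map_eq {G H : Type*} [Group G] [Group H] (f : G →* H)
    {g : G} (hg : ∀ x, x ∈ Submonoid.powers g) (a : ℕ) (x : G) :
    (∃ m : ℕ, x = g ^ a * (g ^ orderOf (f g)) ^ m) ↔ f x = f g ^ a := by
  constructor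
  · rintro ⟨m, rfl⟩
    simp only [map_mul, map_pow, pow_orderOf_eq_one, one_pow, mul_one]
  · intro hx
    obtain ⟨i, hi : g ^ i = (g ^ a)⁻¹ * x⟩ := hg ((g ^ a)⁻¹ * x)
    have map_pow_eq_one : f g ^ i = 1 := by
      rw [← map_pow, hi, map_mul, map_inv, map_pow, hx, inv_mul_cancel]
    obtain ⟨m, rfl⟩ := orderOf_dvd_of_pow_eq_one map_pow_eq_one
    exact ⟨m, by rw [← pow_mul, hi, mul_inv_cancel_left]⟩

section FiniteFieldNorm

variable {K F : Type*} [Field K] [Field F] [Finite F] [Algebra K F]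

theorem eq_norm_of_algebraMap_eq_pow {ζ : K} {x : F}
    (h : algebraMap K F ζ = x ^ ((Nat.card F - 1) / (Nat.card K - 1))) :
    ζ = Algebra.norm K x :=
  (algebraMap K F).injective (h.trans FiniteField.algebraMap_norm_eq_pow.symm)

variable (K) in
theorem orderOf_norm_generator {ω : Fˣ} (hω : ∀ x : Fˣ, x ∈ Subgroup.zpowers ω) :
    orderOf (Units.map (Algebra.norm K) ω) = Nat.card K - 1 := by
  rw [← Nat.card_units]
  refine orderOf_eq_card_of_forall_mem_zpowers fun y ↦ ?_
  obtain ⟨x, rfl⟩ := FiniteField.unitsMap_norm_surjective K F y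
  obtain ⟨i, rfl⟩ := hω x
  exact ⟨i, (map_zpow _ ω i).symm⟩

theorem inCycCoset_iff_norm_eq {ω : Fˣ} (hω : ∀ x : Fˣ, x ∈ Subgroup.zpowers ω) (a : ℕ) (x : Fˣ) :
    InCycCoset ω (Nat.card K - 1) a x ↔ Algebra.norm K (x : F) = Algebra.norm K (ω : F) ^ a := by
  rw [← orderOf_norm_generator K hω, InCycCoset, exists_eq_pow_mul_pow_orderOf_iff_map_eq _
    fun y ↦ mem_powers_iff_mem_zpowers.mpr (hω y), Units.ext_iff]
  rfl

theorem cycNum_eq_card_norm_eq {ω : Fˣ} (hω : ∀ x : Fˣ, x ∈ Subgroup.zpowers ω) (a b : ℕ) :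
    cycNum ω (Nat.card K - 1) a b =
      Nat.card {x : F // Algebra.norm K x = Algebra.norm K (ω : F) ^ a ∧
        Algebra.norm K (x + 1) = Algebra.norm K (ω : F) ^ b} := by
  have isUnit_of_norm_eq {y : F} {c : ℕ} (hy : Algebra.norm K y = Algebra.norm K (ω : F) ^ c) :
      IsUnit y := by
    refine isUnit_iff_ne_zero.mpr (Algebra.norm_ne_zero_iff.mp (hy ▸ pow_ne_zero c ?_))
    exact Algebra.norm_ne_zero_iff.mpr ω.ne_zero
  refine Nat.card_congr (Equiv.ofBijective (fun x ↦ ⟨(x : Fˣ), ?_⟩) ⟨fun x y h ↦ ?_, ?_⟩)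
  · obtain ⟨x, hx, y, hy, hyx⟩ := x
    rw [inCycCoset_iff_norm_eq hω] at hx hy
    exact ⟨hx, hyx ▸ hy⟩
  · exact Subtype.ext (Units.ext (congrArg Subtype.val h))
  · rintro ⟨x, hx, hx'⟩
    obtain ⟨x, rfl⟩ := isUnit_of_norm_eq hx
    obtain ⟨y, hy⟩ := isUnit_of_norm_eq hx'
    refine ⟨⟨x, (inCycCoset_iff_norm_eq hω a x).mpr hx, y, ?_, hy⟩, rfl⟩
    exact (inCycCoset_iff_norm_eq hω b y).mpr (hy ▸ hx')

end FiniteFieldNorm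

theorem cycNum_eq_character_sum_general {K F R : Type*} [Field K] [Field F] [Fintype F]
    [Algebra K F] [Field R] [HasEnoughRootsOfUnity R (Monoid.exponent Kˣ)]
    [Fintype (MulChar K R)] {ω : Fˣ} (hω : ∀ x : Fˣ, x ∈ Subgroup.zpowers ω) (a b : ℕ) :
    (cycNum ω (Nat.card K - 1) a b : R) =
      (1 / ((Nat.card K : R) - 1) ^ 2) *
        ∑ χ : MulChar K R, ∑ ψ : MulChar K R,
          χ ((Algebra.norm K (ω : F) ^ a)⁻¹) * ψ ((Algebra.norm K (ω : F) ^ b)⁻¹) *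
            ∑ x : F, χ (Algebra.norm K x) * ψ (Algebra.norm K (x + 1)) := by
  have : Finite K := Finite.of_injective _ (algebraMap K F).injective
  have card_units_eq : (Nat.card Kˣ : R) = (Nat.card K : R) - 1 := by
    rw [Nat.card_eq_card_units_add_one K, Nat.cast_add_one, add_sub_cancel_right]
  have card_units_ne_zero := natCast_card_ne_zero_of_hasEnoughRootsOfUnity Kˣ R
  have character_sum_eq := sum_sum_mulChar_inv_mul_sum_eq_card (R := R)
    (fun x : F ↦ Algebra.norm K x) (fun x ↦ Algebra.norm K (x + 1))
    (Units.map (Algebra.norm K) ω ^ a) (Units.map (Algebra.norm K) ω ^ b)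
  simp only [Units.val_inv_eq_inv_val, Units.val_pow_eq_pow_val, Units.coe_map] at character_sum_eq
  rw [character_sum_eq, cycNum_eq_card_norm_eq hω, ← card_units_eq, one_div,
    inv_mul_cancel_left₀ (pow_ne_zero 2 card_units_ne_zero)]

/-- The character-sum formula for the cyclotomic number `(a,b)_{q-1}` over `𝔽_{q^r}`:
`(a,b)_{q-1} = (1/(q-1)^2) ∑_{χ,ψ} χ(ω^{-ak}) ψ(ω^{-bk}) J_{𝔽_{q^r}}(χ∘N, ψ∘N)`,
where `N` is the field norm from `𝔽_{q^r}` to `𝔽_q` and `ζ = ω^k` viewed in `𝔽_q`. -/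
theorem cycNum_eq_character_sum {p n q r k : ℕ} (hp : p.Prime) (hn : 1 ≤ n) (hq : q = p ^ n)
    (hr : 2 ≤ r) (hk : k = (q ^ r - 1) / (q - 1))
    {K F : Type*} [Field K] [Field F] [Fintype K] [Fintype F] [Algebra K F]
    (hK : Fintype.card K = q) (hF : Fintype.card F = q ^ r)
    (ω : Fˣ) (hω : ∀ x : Fˣ, x ∈ Subgroup.zpowers ω)
    (ζ : K) (hζ : algebraMap K F ζ = (ω : F) ^ k)
    (a b : ℕ) (ha : a ≤ q - 2) (hb : b ≤ q - 2)
    [Fintype (MulChar K ℂ)] :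
    (cycNum ω (q - 1) a b : ℂ) =
      (1 / ((q : ℂ) - 1) ^ 2) *
        ∑ χ : MulChar K ℂ, ∑ ψ : MulChar K ℂ,
          χ ((ζ ^ a)⁻¹) * ψ ((ζ ^ b)⁻¹) *
            ∑ x : F, χ (Algebra.norm K x) * ψ (Algebra.norm K (x + 1)) := by
  have card_quotient : k = (Nat.card F - 1) / (Nat.card K - 1) := by
    simp only [hk, hF, hK, Nat.card_eq_fintype_card]
  have norm_eq := eq_norm_of_algebraMap_eq_pow (card_quotient ▸ hζ)
  simpa only [Nat.card_eq_fintype_card, hK, norm_eq] using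
    cycNum_eq_character_sum_general (K := K) (R := ℂ) hω a b
end

section
/- Let q = p^n be a prime power and r ≥ 2 an integer. Let χ, ψ be multiplicative characters of 𝔽_q^×, and set χ̃ = χ∘N and ψ̃ = ψ∘N where N = N_{𝔽_{q^r}/𝔽_q} is the field norm. If (χ,ψ) = (1,1) (both trivial), then J_{𝔽_{q^r}}(χ̃,ψ̃) = q^r − 2 and J_{𝔽_q}(χ,ψ)^r = (q−2)^r. If (χ,ψ) ≠ (1,1), then J_{𝔽_{q^r}}(χ̃,ψ̃) = (−1)^{r−1} · J_{𝔽_q}(χ,ψ)^r. -/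
/-!
For characters `χ, ψ` of a finite field `K`, the function `lam f = χ (f 0) * ψ (f 1)` on `K[X]` is
completely multiplicative. Suppose `(χ, ψ) ≠ (1, 1)`. In degree `n ≥ 2` the values of monic
polynomials at `0` and `1` can be rescaled independently, so `lam` sums to zero there, and
`L = ∑ lam f * T ^ deg f` (over monic `f`) is just `1 + J * T` with `J` the Jacobi sum over `K`.

With `Λ` the von Mangoldt function of `K[X]`, the identity `∑ Λ g = deg f` over monic `g ∣ f` turns
`V = ∑ Λ f * lam f * T ^ deg f` into the logarithmic derivative `T * (dL/dT) / L`, which is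
`J * T / (1 + J * T)` and has coefficient `(-1) ^ (r - 1) * J ^ r` at `T ^ r`.

In an extension `F` of degree `r`, a monic `g` of degree `r` is the characteristic polynomial of
exactly `Λ g` elements, and that of `-x` takes the values `N x` at `0` and `N (x + 1)` at `1`.
Hence that same coefficient is `∑ x : F, χ (N x) * ψ (N (x + 1))`.
-/

open Polynomial Finset UniqueFactorizationMonoid
open scoped IntermediateField

section Charpoly

theorem charpoly_blockDiagonal {R m n : Type*} [CommRing R] [Fintype m] [DecidableEq m]
    [Fintype n] [DecidableEq n] (M : n → Matrix m m R) :
    (Matrix.blockDiagonal M).charpoly = ∏ i, (M i).charpoly := by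
  have hcharmatrix : (Matrix.blockDiagonal M).charmatrix =
      Matrix.blockDiagonal fun i => (M i).charmatrix := by
    ext1 ⟨i, k⟩ ⟨j, l⟩
    by_cases hkl : k = l <;>
      simp [Matrix.charmatrix_apply, Matrix.blockDiagonal_apply, Matrix.diagonal_apply, hkl]
  rw [Matrix.charpoly, hcharmatrix, Matrix.det_blockDiagonal]
  rfl

theorem charpoly_lmul_eq_minpoly_pow (K : Type*) {L : Type*} [Field K] [Field L] [Algebra K L]
    [FiniteDimensional K L] (x : L) :
    (Algebra.lmul K L x).charpoly = minpoly K x ^ Module.finrank K⟮x⟯ L := by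
  classical
  let pb := IntermediateField.adjoin.powerBasis (Algebra.IsIntegral.isIntegral (R := K) x)
  let b := Module.finBasis K⟮x⟯ L
  have hgen : algebraMap K⟮x⟯ L pb.gen = x := by
    rw [IntermediateField.adjoin.powerBasis_gen, IntermediateField.AdjoinSimple.algebraMap_gen]
  calc (Algebra.lmul K L x).charpoly
      = (Algebra.leftMulMatrix (pb.basis.smulTower b) (algebraMap K⟮x⟯ L pb.gen)).charpoly := by
        rw [hgen, ← LinearMap.charpoly_toMatrix _ (pb.basis.smulTower b)]
        rfl
    _ = minpoly K x ^ Module.finrank K⟮x⟯ L := by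
        rw [Algebra.smulTower_leftMulMatrix_algebraMap, charpoly_blockDiagonal, prod_const,
          charpoly_leftMulMatrix, card_univ, Fintype.card_fin,
          IntermediateField.adjoin.powerBasis_gen, IntermediateField.minpoly_gen]

theorem eval_charpoly_lmul {A B : Type*} [CommRing A] [Ring B] [Algebra A B] [Module.Free A B]
    [Module.Finite A B] (x : B) (c : A) :
    (Algebra.lmul A B x).charpoly.eval c = Algebra.norm A (algebraMap A B c - x) := by
  rw [LinearMap.eval_charpoly, Algebra.norm_apply, map_sub (Algebra.lmul A B), AlgHom.commutes]

end Charpoly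

section VonMangoldt

variable {K : Type*} [Field K]

open Classical in
/-- The analogue for monic polynomials over a field of the von Mangoldt function, with values in
`ℕ`: a power of an irreducible polynomial `P` is sent to `deg P`, anything else to `0`. -/
noncomputable def polyVonMangoldt (f : K[X]) : ℕ :=
  if IsPrimePow f then (radical f).natDegree else 0

theorem polyVonMangoldt_of_not_isPrimePow {f : K[X]} (hf : ¬IsPrimePow f) :
    polyVonMangoldt f = 0 :=
  if_neg hf

theorem polyVonMangoldt_pow {P : K[X]} (hP : Irreducible P) {j : ℕ} (hj : j ≠ 0) :
    polyVonMangoldt (P ^ j) = P.natDegree := by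
  classical
  rw [polyVonMangoldt, if_pos (hP.prime.isPrimePow.pow hj), radical_pow_of_prime hP.prime hj,
    natDegree_eq_of_degree_eq degree_normalize]

theorem exists_monic_irreducible_pow_eq {f : K[X]} (hf : f.Monic) (hfpow : IsPrimePow f) :
    ∃ (P : K[X]) (j : ℕ), P.Monic ∧ Irreducible P ∧ j ≠ 0 ∧ P ^ j = f := by
  classical
  obtain ⟨Q, j, hQ, hj, rfl⟩ := hfpow
  refine ⟨normalize Q, j, monic_normalize hQ.ne_zero, ?_, hj.ne', ?_⟩
  · exact (associated_normalize Q).irreducible hQ.irreducible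
  · exact eq_of_monic_of_associated ((monic_normalize hQ.ne_zero).pow j) hf
      (associated_normalize Q).symm.pow_pow

theorem eq_and_eq_of_monic_irreducible_pow_eq_pow {P Q : K[X]} (hPm : P.Monic) (hQm : Q.Monic)
    (hP : Irreducible P) (hQ : Irreducible Q) {i j : ℕ} (hi : i ≠ 0) (h : P ^ i = Q ^ j) :
    P = Q ∧ i = j := by
  have hdvd : P ∣ Q := hP.prime.dvd_of_dvd_pow (h ▸ dvd_pow_self P hi)
  obtain rfl : P = Q := eq_of_monic_of_associated hPm hQm (hP.associated_of_dvd hQ hdvd)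
  refine ⟨rfl, Nat.eq_of_mul_eq_mul_right hP.natDegree_pos ?_⟩
  rw [← natDegree_pow, h, natDegree_pow]

theorem mem_normalizedFactors_iff_monic [DecidableEq K] {f P : K[X]} (hf : f ≠ 0) :
    P ∈ normalizedFactors f ↔ P.Monic ∧ Irreducible P ∧ P ∣ f := by
  rw [mem_normalizedFactors_iff' hf]
  constructor
  · rintro ⟨hP, hnorm, hdvd⟩
    exact ⟨hnorm ▸ monic_normalize hP.ne_zero, hP, hdvd⟩
  · rintro ⟨hPm, hP, hdvd⟩
    exact ⟨hP, hPm.normalize_eq_self, hdvd⟩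

theorem pow_dvd_iff_le_count_normalizedFactors [DecidableEq K] {f P : K[X]} (hf : f ≠ 0)
    (hPm : P.Monic) (hP : Irreducible P) (j : ℕ) :
    P ^ j ∣ f ↔ j ≤ (normalizedFactors f).count P := by
  rw [pow_dvd_iff_le_emultiplicity, emultiplicity_eq_count_normalizedFactors hP hf,
    hPm.normalize_eq_self, Nat.cast_le]

theorem sum_count_mul_natDegree_normalizedFactors [DecidableEq K] {f : K[X]} (hf : f.Monic) :
    ∑ P ∈ (normalizedFactors f).toFinset, (normalizedFactors f).count P * P.natDegree =
      f.natDegree := by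
  have hmonic : ∀ P ∈ normalizedFactors f, P.Monic := fun P hP =>
    ((mem_normalizedFactors_iff_monic hf.ne_zero).mp hP).1
  simp_rw [← smul_eq_mul]
  rw [← sum_multiset_map_count, ← natDegree_multiset_prod_of_monic _ hmonic,
    prod_normalizedFactors_eq hf.ne_zero, hf.normalize_eq_self]

theorem mk_mem_sigma_normalizedFactors_iff [DecidableEq K] {f : K[X]} (hf : f ≠ 0) {P : K[X]}
    {j : ℕ} :
    (⟨P, j⟩ : Σ _ : K[X], ℕ) ∈ (normalizedFactors f).toFinset.sigma
        (fun P => Icc 1 ((normalizedFactors f).count P)) ↔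
      P.Monic ∧ Irreducible P ∧ j ≠ 0 ∧ P ^ j ∣ f := by
  simp only [mem_sigma, Multiset.mem_toFinset, mem_Icc, mem_normalizedFactors_iff_monic hf,
    Nat.one_le_iff_ne_zero]
  constructor
  · rintro ⟨⟨hPm, hP, -⟩, hj, hle⟩
    exact ⟨hPm, hP, hj, (pow_dvd_iff_le_count_normalizedFactors hf hPm hP j).mpr hle⟩
  · rintro ⟨hPm, hP, hj, hdvd⟩
    exact ⟨⟨hPm, hP, (dvd_pow_self P hj).trans hdvd⟩, hj,
      (pow_dvd_iff_le_count_normalizedFactors hf hPm hP j).mp hdvd⟩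

open Classical in
/-- The finite set of monic divisors of a nonzero polynomial `f` over a field, realised as the
products of the sub-multisets of the monic irreducible factors of `f`. At `f = 0` it is the junk
value `{1}`. -/
noncomputable def monicDivisors (f : K[X]) : Finset K[X] :=
  ((normalizedFactors f).powerset.map Multiset.prod).toFinset

theorem mem_monicDivisors {f : K[X]} (hf : f ≠ 0) {g : K[X]} :
    g ∈ monicDivisors f ↔ g.Monic ∧ g ∣ f := by
  classical
  simp only [monicDivisors, Multiset.mem_toFinset, Multiset.mem_map, Multiset.mem_powerset]
  constructor
  · rintro ⟨s, hs, rfl⟩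
    have hmonic : ∀ P ∈ s, P.Monic := fun P hP =>
      ((mem_normalizedFactors_iff_monic hf).mp (Multiset.mem_of_le hs hP)).1
    exact ⟨by simpa using monic_multiset_prod_of_monic s id hmonic,
      (Multiset.prod_dvd_prod_of_le hs).trans (prod_normalizedFactors hf).dvd⟩
  · rintro ⟨hgm, hdvd⟩
    refine ⟨normalizedFactors g, ?_, ?_⟩
    · exact (dvd_iff_normalizedFactors_le_normalizedFactors hgm.ne_zero hf).mp hdvd
    · rw [prod_normalizedFactors_eq hgm.ne_zero, hgm.normalize_eq_self]

theorem sum_monicDivisors_polyVonMangoldt {f : K[X]} (hf : f.Monic) :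
    ∑ g ∈ monicDivisors f, polyVonMangoldt g = f.natDegree := by
  classical
  set primePowers : Finset (Σ _ : K[X], ℕ) := (normalizedFactors f).toFinset.sigma
    fun P => Icc 1 ((normalizedFactors f).count P) with hprimePowers
  have hmem {P : K[X]} {j : ℕ} : (⟨P, j⟩ : Σ _ : K[X], ℕ) ∈ primePowers ↔ _ :=
    mk_mem_sigma_normalizedFactors_iff hf.ne_zero
  have hsum : ∑ t ∈ primePowers, t.1.natDegree = ∑ g ∈ monicDivisors f, polyVonMangoldt g := by
    refine sum_of_injOn (fun t => t.1 ^ t.2) ?_ ?_ ?_ ?_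
    · rintro ⟨P, i⟩ hPi ⟨Q, j⟩ hQj hpow
      obtain ⟨hPm, hP, hi, -⟩ := hmem.mp hPi
      obtain ⟨hQm, hQ, -⟩ := hmem.mp hQj
      obtain ⟨rfl, rfl⟩ := eq_and_eq_of_monic_irreducible_pow_eq_pow hPm hQm hP hQ hi hpow
      rfl
    · rintro ⟨P, j⟩ hPj
      obtain ⟨hPm, -, -, hdvd⟩ := hmem.mp hPj
      exact (mem_monicDivisors hf.ne_zero).mpr ⟨hPm.pow j, hdvd⟩
    · refine fun g hg hnot => polyVonMangoldt_of_not_isPrimePow fun hpow => hnot ?_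
      obtain ⟨hgm, hdvd⟩ := (mem_monicDivisors hf.ne_zero).mp hg
      obtain ⟨P, j, hPm, hP, hj, rfl⟩ := exists_monic_irreducible_pow_eq hgm hpow
      exact ⟨⟨P, j⟩, hmem.mpr ⟨hPm, hP, hj, hdvd⟩, rfl⟩
    · rintro ⟨P, j⟩ hPj
      obtain ⟨-, hP, hj, -⟩ := hmem.mp hPj
      exact (polyVonMangoldt_pow hP hj).symm
  rw [← hsum, ← sum_count_mul_natDegree_normalizedFactors hf, hprimePowers, sum_sigma]
  simp

end VonMangoldt

section MonicOfDegree

theorem finite_setOf_monic_natDegree_eq (K : Type*) [Field K] [Finite K] (n : ℕ) :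
    {f : K[X] | f.Monic ∧ f.natDegree = n}.Finite :=
  Set.finite_coe_iff.mp <| Finite.of_equiv (Fin n → K)
    ((monicEquivDegreeLT n).trans (degreeLTEquiv K n).toEquiv).symm

/-- The monic polynomials of degree `n` over a finite field. -/
noncomputable def monicOfDegree (K : Type*) [Field K] [Finite K] (n : ℕ) : Finset K[X] :=
  (finite_setOf_monic_natDegree_eq K n).toFinset

variable {K : Type*} [Field K] [Finite K]

@[simp]
theorem mem_monicOfDegree {n : ℕ} {f : K[X]} :
    f ∈ monicOfDegree K n ↔ f.Monic ∧ f.natDegree = n := by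
  simp [monicOfDegree]

theorem monicOfDegree_zero : monicOfDegree K 0 = {1} := by
  ext f
  rw [mem_monicOfDegree, mem_singleton]
  constructor
  · rintro ⟨hf, hdeg⟩
    exact hf.natDegree_eq_zero.mp hdeg
  · rintro rfl
    exact ⟨monic_one, natDegree_one⟩

theorem sum_monicOfDegree_one {A : Type*} [AddCommMonoid A] [Fintype K] (w : K[X] → A) :
    ∑ f ∈ monicOfDegree K 1, w f = ∑ c : K, w (X + C c) := by
  refine (sum_bij (fun c _ => X + C c) ?_ ?_ ?_ ?_).symm
  · exact fun c _ => mem_monicOfDegree.mpr ⟨monic_X_add_C c, natDegree_X_add_C c⟩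
  · exact fun c _ d _ h => C_injective (add_left_cancel h)
  · intro f hf
    rw [mem_monicOfDegree] at hf
    exact ⟨f.coeff 0, mem_univ _, (hf.1.eq_X_add_C hf.2).symm⟩
  · exact fun c _ => rfl

theorem sum_antidiagonal_monicOfDegree {A : Type*} [AddCommMonoid A] (w : K[X] → K[X] → A)
    (n : ℕ) :
    ∑ p ∈ antidiagonal n, ∑ g ∈ monicOfDegree K p.1, ∑ h ∈ monicOfDegree K p.2, w g (g * h) =
      ∑ f ∈ monicOfDegree K n, ∑ g ∈ monicDivisors f, w g f := by
  simp_rw [← sum_product', sum_sigma']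
  refine sum_bij' (fun t _ => ⟨t.2.1 * t.2.2, t.2.1⟩)
    (fun s _ => ⟨(s.2.natDegree, (s.1 / s.2).natDegree), s.2, s.1 / s.2⟩) ?_ ?_ ?_ ?_ ?_
  · rintro ⟨⟨i, j⟩, g, h⟩ ht
    simp only [mem_sigma, mem_product, HasAntidiagonal.mem_antidiagonal,
      mem_monicOfDegree] at ht ⊢
    obtain ⟨rfl, ⟨hg, rfl⟩, hh, rfl⟩ := ht
    exact ⟨⟨hg.mul hh, hg.natDegree_mul hh⟩,
      (mem_monicDivisors (hg.mul hh).ne_zero).mpr ⟨hg, dvd_mul_right g h⟩⟩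
  · rintro ⟨f, g⟩ hs
    simp only [mem_sigma, mem_product, HasAntidiagonal.mem_antidiagonal,
      mem_monicOfDegree, and_true] at hs ⊢
    obtain ⟨⟨hf, rfl⟩, hgf⟩ := hs
    obtain ⟨hg, h, rfl⟩ := (mem_monicDivisors hf.ne_zero).mp hgf
    have hh : h.Monic := hg.of_mul_monic_left hf
    rw [mul_div_cancel_left₀ h hg.ne_zero]
    exact ⟨(hg.natDegree_mul hh).symm, hg, hh⟩
  · rintro ⟨⟨i, j⟩, g, h⟩ ht
    simp only [mem_sigma, mem_product, HasAntidiagonal.mem_antidiagonal,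
      mem_monicOfDegree] at ht
    obtain ⟨-, ⟨hg, rfl⟩, -, rfl⟩ := ht
    simp only [mul_div_cancel_left₀ h hg.ne_zero]
  · rintro ⟨f, g⟩ hs
    simp only [mem_sigma, mem_monicOfDegree] at hs
    obtain ⟨⟨hf, -⟩, hgf⟩ := hs
    obtain ⟨hg, h, rfl⟩ := (mem_monicDivisors hf.ne_zero).mp hgf
    simp only [mul_div_cancel_left₀ h hg.ne_zero]
  · exact fun t _ => rfl

end MonicOfDegree

section MonicSeries

variable {K R : Type*} [Field K] [Finite K]

section CommSemiring

variable [CommSemiring R]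

/-- The generating series `∑ w(f) T ^ deg f` over monic polynomials `f`; for multiplicative `w`
this is the `L`-series of `w`. -/
noncomputable def monicSeries (w : K[X] → R) : PowerSeries R :=
  PowerSeries.mk fun n => ∑ f ∈ monicOfDegree K n, w f

@[simp]
theorem coeff_monicSeries (w : K[X] → R) (n : ℕ) :
    PowerSeries.coeff n (monicSeries w) = ∑ f ∈ monicOfDegree K n, w f :=
  PowerSeries.coeff_mk _ _

theorem coeff_monicSeries_natDegree_mul (w : K[X] → R) (n : ℕ) :
    PowerSeries.coeff n (monicSeries fun f => (f.natDegree : R) * w f) =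
      n * PowerSeries.coeff n (monicSeries w) := by
  rw [coeff_monicSeries, coeff_monicSeries, mul_sum]
  exact sum_congr rfl fun f hf => by rw [(mem_monicOfDegree.mp hf).2]

theorem monicSeries_polyVonMangoldt_mul (l : K[X] →* R) :
    monicSeries (fun f => (polyVonMangoldt f : R) * l f) * monicSeries l =
      monicSeries fun f => (f.natDegree : R) * l f := by
  ext n
  calc
    _ = ∑ p ∈ antidiagonal n, ∑ g ∈ monicOfDegree K p.1, ∑ h ∈ monicOfDegree K p.2,
          (polyVonMangoldt g : R) * l (g * h) := by
      simp only [PowerSeries.coeff_mul, coeff_monicSeries, sum_mul_sum, map_mul, mul_assoc]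
    _ = ∑ f ∈ monicOfDegree K n, ∑ g ∈ monicDivisors f, (polyVonMangoldt g : R) * l f :=
      sum_antidiagonal_monicOfDegree (fun g f => (polyVonMangoldt g : R) * l f) n
    _ = _ := by
      rw [coeff_monicSeries]
      refine sum_congr rfl fun f hf => ?_
      rw [← sum_mul, ← Nat.cast_sum, sum_monicDivisors_polyVonMangoldt (mem_monicOfDegree.mp hf).1]

end CommSemiring

theorem coeff_succ_of_mul_one_add_C_mul_X [CommRing R] {V : PowerSeries R} {a : R}
    (hV : V * (1 + PowerSeries.C a * PowerSeries.X) = PowerSeries.C a * PowerSeries.X) (n : ℕ) :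
    PowerSeries.coeff (n + 1) V = (-1) ^ n * a ^ (n + 1) := by
  have hV' : V + V * PowerSeries.C a * PowerSeries.X = PowerSeries.C a * PowerSeries.X := by
    rw [← hV]
    ring
  have hcoeff_zero : PowerSeries.coeff 0 V = 0 := by
    simpa using congrArg (PowerSeries.coeff 0) hV'
  induction n with
  | zero => simpa [hcoeff_zero] using congrArg (PowerSeries.coeff 1) hV'
  | succ n ih =>
    have hrec : PowerSeries.coeff (n + 2) V + PowerSeries.coeff (n + 1) V * a = 0 := by
      simpa [PowerSeries.coeff_succ_mul_X, PowerSeries.coeff_X] using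
        congrArg (PowerSeries.coeff (n + 2)) hV'
    rw [eq_neg_of_add_eq_zero_left hrec, ih]
    ring

end MonicSeries

section CharpolyFibers

section FiniteDimensional

variable {K L : Type*} [Field K] [Field L] [Algebra K L] [FiniteDimensional K L]

theorem isPrimePow_charpoly_lmul (x : L) : IsPrimePow (Algebra.lmul K L x).charpoly := by
  rw [charpoly_lmul_eq_minpoly_pow]
  exact (minpoly.prime (Algebra.IsIntegral.isIntegral x)).isPrimePow.pow Module.finrank_pos.ne'

theorem charpoly_lmul_eq_pow_iff {P : K[X]} (hPm : P.Monic) (hP : Irreducible P) {j : ℕ}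
    (hdeg : (P ^ j).natDegree = Module.finrank K L) {x : L} :
    (Algebra.lmul K L x).charpoly = P ^ j ↔ minpoly K x = P := by
  have hx : IsIntegral K x := Algebra.IsIntegral.isIntegral x
  constructor
  · intro h
    rw [charpoly_lmul_eq_minpoly_pow] at h
    exact (eq_and_eq_of_monic_irreducible_pow_eq_pow (minpoly.monic hx) hPm
      (minpoly.irreducible hx) hP Module.finrank_pos.ne' h).1
  · rintro rfl
    have hmul : Module.finrank K⟮x⟯ L * (minpoly K x).natDegree =
        j * (minpoly K x).natDegree := by
      rw [← natDegree_pow, ← natDegree_pow, ← charpoly_lmul_eq_minpoly_pow, hdeg,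
        LinearMap.charpoly_natDegree]
    rw [charpoly_lmul_eq_minpoly_pow, Nat.eq_of_mul_eq_mul_right hP.natDegree_pos hmul]

end FiniteDimensional

variable {K F : Type*} [Field K] [Field F] [Algebra K F]

theorem splits_map_of_natDegree_dvd_finrank [Finite F] {P : K[X]} (hP : Irreducible P)
    (hdvd : P.natDegree ∣ Module.finrank K F) : (P.map (algebraMap K F)).Splits := by
  have : Finite K := Finite.of_injective _ (algebraMap K F).injective
  have hdvd_X_pow_sub : P ∣ X ^ Nat.card F - X := by
    rw [Module.natCard_eq_pow_finrank (K := K)]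
    exact hP.natDegree_dvd_iff_dvd_X_pow_card_pow_sub_X.mp hdvd
  refine (splits_X_pow_nat_card_sub_X (K := F)).of_dvd
    (FiniteField.X_pow_card_sub_X_ne_zero F Finite.one_lt_card) ?_
  simpa using Polynomial.map_dvd (algebraMap K F) hdvd_X_pow_sub

open Classical in
theorem card_filter_minpoly_eq [Fintype F] {P : K[X]} (hPm : P.Monic) (hP : Irreducible P)
    (hdvd : P.natDegree ∣ Module.finrank K F) : #{x : F | minpoly K x = P} = P.natDegree := by
  have : Finite K := Finite.of_injective _ (algebraMap K F).injective
  have hroots : ({x : F | minpoly K x = P} : Finset F) = (P.rootSet F).toFinset := by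
    ext x
    rw [mem_filter_univ, Set.mem_toFinset, mem_rootSet]
    constructor
    · rintro rfl
      exact ⟨hPm.ne_zero, minpoly.aeval K x⟩
    · rintro ⟨-, hx⟩
      exact (minpoly.eq_of_irreducible_of_monic hP hx hPm).symm
  rw [hroots, Set.toFinset_card]
  exact card_rootSet_eq_natDegree (PerfectField.separable_of_irreducible hP)
    (splits_map_of_natDegree_dvd_finrank hP hdvd)

open Classical in
theorem card_filter_charpoly_lmul_eq [Fintype F] {g : K[X]} (hg : g.Monic)
    (hdeg : g.natDegree = Module.finrank K F) :
    #{x : F | (Algebra.lmul K F x).charpoly = g} = polyVonMangoldt g := by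
  by_cases hpow : IsPrimePow g
  · obtain ⟨P, j, hPm, hP, hj, rfl⟩ := exists_monic_irreducible_pow_eq hg hpow
    simp_rw [charpoly_lmul_eq_pow_iff hPm hP hdeg]
    rw [polyVonMangoldt_pow hP hj,
      card_filter_minpoly_eq hPm hP ⟨j, by rw [← hdeg, natDegree_pow, mul_comm]⟩]
  · rw [polyVonMangoldt_of_not_isPrimePow hpow, card_eq_zero, filter_eq_empty_iff]
    rintro x - rfl
    exact hpow (isPrimePow_charpoly_lmul x)

theorem sum_charpoly_lmul [Finite K] [Fintype F] {R : Type*} [Semiring R]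
    (w : K[X] → R) :
    ∑ x : F, w (Algebra.lmul K F x).charpoly =
      ∑ g ∈ monicOfDegree K (Module.finrank K F), (polyVonMangoldt g : R) * w g := by
  classical
  have hmaps (x : F) (_ : x ∈ univ) :
      (Algebra.lmul K F x).charpoly ∈ monicOfDegree K (Module.finrank K F) :=
    mem_monicOfDegree.mpr ⟨LinearMap.charpoly_monic _, LinearMap.charpoly_natDegree _⟩
  rw [← sum_fiberwise_of_maps_to' hmaps]
  refine sum_congr rfl fun g hg => ?_
  obtain ⟨hgm, hdeg⟩ := mem_monicOfDegree.mp hg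
  rw [sum_const, card_filter_charpoly_lmul_eq hgm hdeg, nsmul_eq_mul]

end CharpolyFibers

section CharacterSums

variable {K R : Type*} [Field K]

/-- Multiplies the value of `f` at `a` by `v` and keeps its value at `b` (for `a ≠ b`), by adding a
multiple of the Lagrange interpolation polynomial `(X - b) / (a - b)`. -/
noncomputable def rescaleEval (a b v : K) (f : K[X]) : K[X] :=
  f + C ((v - 1) * f.eval a / (a - b)) * (X - C b)

theorem eval_left_rescaleEval {a b : K} (hab : a ≠ b) (v : K) (f : K[X]) :
    (rescaleEval a b v f).eval a = v * f.eval a := by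
  have hsub : a - b ≠ 0 := sub_ne_zero.mpr hab
  simp only [rescaleEval, eval_add, eval_mul, eval_C, eval_sub, eval_X]
  field_simp
  ring

theorem eval_right_rescaleEval (a b v : K) (f : K[X]) :
    (rescaleEval a b v f).eval b = f.eval b := by
  simp [rescaleEval]

theorem rescaleEval_rescaleEval {a b : K} (hab : a ≠ b) {u v : K} (huv : u * v = 1) (f : K[X]) :
    rescaleEval a b u (rescaleEval a b v f) = f := by
  have hcancel : (v - 1) * f.eval a + (u - 1) * (v * f.eval a) = 0 := by
    linear_combination f.eval a * huv
  rw [rescaleEval, eval_left_rescaleEval hab, rescaleEval, add_assoc, ← add_mul, ← C_add,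
    ← add_div, hcancel, zero_div, C_0, zero_mul, add_zero]

theorem rescaleEval_mem_monicOfDegree [Finite K] {n : ℕ} (hn : 2 ≤ n) (a b v : K) {f : K[X]}
    (hf : f ∈ monicOfDegree K n) : rescaleEval a b v f ∈ monicOfDegree K n := by
  obtain ⟨hfm, rfl⟩ := mem_monicOfDegree.mp hf
  have hlt : (C ((v - 1) * f.eval a / (a - b)) * (X - C b)).degree < f.degree := by
    refine degree_lt_degree (lt_of_le_of_lt ?_ hn)
    exact (natDegree_C_mul_le _ _).trans (natDegree_X_sub_C_le b)
  exact mem_monicOfDegree.mpr ⟨hfm.add_of_left hlt, natDegree_add_eq_left_of_degree_lt hlt⟩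

theorem sum_monicOfDegree_mulChar_eval_mul_eq_zero [Finite K] [CommRing R] [IsDomain R]
    {χ : MulChar K R} (hχ : χ ≠ 1) {n : ℕ} (hn : 2 ≤ n) {a b : K} (hab : a ≠ b) (w : K → R) :
    ∑ f ∈ monicOfDegree K n, χ (f.eval a) * w (f.eval b) = 0 := by
  obtain ⟨u, hu⟩ := MulChar.ne_one_iff.mp hχ
  refine eq_zero_of_mul_eq_self_left hu ?_
  rw [mul_sum]
  refine sum_nbij' (rescaleEval a b u) (rescaleEval a b ↑u⁻¹)
    (fun f => rescaleEval_mem_monicOfDegree hn a b u)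
    (fun f => rescaleEval_mem_monicOfDegree hn a b ↑u⁻¹)
    (fun f _ => rescaleEval_rescaleEval hab u.inv_mul f)
    (fun f _ => rescaleEval_rescaleEval hab u.mul_inv f) fun f _ => ?_
  rw [eval_left_rescaleEval hab, eval_right_rescaleEval, map_mul, mul_assoc]

end CharacterSums

section JacobiSum

variable {K R : Type*} [Field K] [CommRing R]

/-- The completely multiplicative function `f ↦ χ (f 0) * ψ (f 1)` on polynomials, whose sum over
the polynomials `X + c` is the Jacobi sum of `χ` and `ψ`. -/
noncomputable def evalMulChar (χ ψ : MulChar K R) : K[X] →* R where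
  toFun f := χ (f.eval 0) * ψ (f.eval 1)
  map_one' := by simp
  map_mul' f g := by simp only [eval_mul, map_mul, mul_mul_mul_comm]

theorem evalMulChar_apply (χ ψ : MulChar K R) (f : K[X]) :
    evalMulChar χ ψ f = χ (f.eval 0) * ψ (f.eval 1) :=
  rfl

theorem sum_monicOfDegree_one_evalMulChar [Fintype K] (χ ψ : MulChar K R) :
    ∑ f ∈ monicOfDegree K 1, evalMulChar χ ψ f = ∑ x : K, χ x * ψ (x + 1) := by
  simp [sum_monicOfDegree_one, evalMulChar_apply, add_comm]

theorem sum_monicOfDegree_evalMulChar_eq_zero [Finite K] [IsDomain R] {χ ψ : MulChar K R}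
    (hχψ : (χ, ψ) ≠ (1, 1)) {n : ℕ} (hn : 2 ≤ n) :
    ∑ f ∈ monicOfDegree K n, evalMulChar χ ψ f = 0 := by
  simp only [evalMulChar_apply]
  by_cases hχ : χ = 1
  · have hψ : ψ ≠ 1 := fun hψ => hχψ (Prod.ext hχ hψ)
    simp_rw [mul_comm (χ _)]
    exact sum_monicOfDegree_mulChar_eval_mul_eq_zero hψ hn one_ne_zero χ
  · exact sum_monicOfDegree_mulChar_eval_mul_eq_zero hχ hn zero_ne_one ψ

theorem monicSeries_evalMulChar [Fintype K] [IsDomain R] {χ ψ : MulChar K R}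
    (hχψ : (χ, ψ) ≠ (1, 1)) :
    monicSeries (evalMulChar χ ψ) =
      1 + PowerSeries.C (∑ x : K, χ x * ψ (x + 1)) * PowerSeries.X := by
  ext n
  rw [coeff_monicSeries, ← sum_monicOfDegree_one_evalMulChar]
  match n with
  | 0 => simp [monicOfDegree_zero]
  | 1 => simp [PowerSeries.coeff_one]
  | n + 2 =>
    rw [sum_monicOfDegree_evalMulChar_eq_zero hχψ (Nat.le_add_left 2 n)]
    simp [PowerSeries.coeff_one]

theorem monicSeries_natDegree_mul_evalMulChar [Fintype K] [IsDomain R] {χ ψ : MulChar K R}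
    (hχψ : (χ, ψ) ≠ (1, 1)) :
    monicSeries (fun f => (f.natDegree : R) * evalMulChar χ ψ f) =
      PowerSeries.C (∑ x : K, χ x * ψ (x + 1)) * PowerSeries.X := by
  ext n
  rw [coeff_monicSeries_natDegree_mul, monicSeries_evalMulChar hχψ]
  match n with
  | 0 => simp
  | 1 => simp [PowerSeries.coeff_one]
  | n + 2 => simp [PowerSeries.coeff_one]

theorem sum_mulChar_norm_eq_coeff_monicSeries [Finite K] {F : Type*} [Field F] [Fintype F]
    [Algebra K F] (χ ψ : MulChar K R) :
    ∑ x : F, χ (Algebra.norm K x) * ψ (Algebra.norm K (x + 1)) =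
      PowerSeries.coeff (Module.finrank K F)
        (monicSeries fun f => (polyVonMangoldt f : R) * evalMulChar χ ψ f) := by
  rw [coeff_monicSeries, ← sum_charpoly_lmul, ← Equiv.sum_comp (Equiv.neg F)]
  refine sum_congr rfl fun x _ => ?_
  rw [Equiv.neg_apply, evalMulChar_apply, eval_charpoly_lmul, eval_charpoly_lmul, map_zero,
    map_one, zero_sub, sub_eq_neg_add]

theorem sum_mulChar_norm_eq_neg_one_pow_mul [Fintype K] [IsDomain R] {F : Type*} [Field F]
    [Fintype F] [Algebra K F] {χ ψ : MulChar K R} (hχψ : (χ, ψ) ≠ (1, 1)) :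
    ∑ x : F, χ (Algebra.norm K x) * ψ (Algebra.norm K (x + 1)) =
      (-1) ^ (Module.finrank K F - 1) * (∑ x : K, χ x * ψ (x + 1)) ^ Module.finrank K F := by
  have hlog := monicSeries_polyVonMangoldt_mul (evalMulChar χ ψ)
  rw [monicSeries_evalMulChar hχψ, monicSeries_natDegree_mul_evalMulChar hχψ] at hlog
  obtain ⟨m, hm⟩ := Nat.exists_eq_succ_of_ne_zero (Module.finrank_pos (R := K) (M := F)).ne'
  rw [sum_mulChar_norm_eq_coeff_monicSeries, hm]
  exact coeff_succ_of_mul_one_add_C_mul_X hlog m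

variable (R) in
theorem sum_one_mulChar_mul_one_mulChar_add_one (L : Type*) [Field L] [Fintype L] :
    ∑ x : L, (1 : MulChar L R) x * (1 : MulChar L R) (x + 1) = (Fintype.card L : R) - 2 := by
  have hneg (x : L) : (1 : MulChar L R) (-x) = (1 : MulChar L R) x := by
    rw [neg_eq_neg_one_mul, map_mul, MulChar.one_apply isUnit_one.neg, one_mul]
  rw [← jacobiSum_one_one, jacobiSum, ← Equiv.sum_comp (Equiv.neg L)]
  simp only [Equiv.neg_apply, hneg, sub_eq_neg_add]

theorem one_mulChar_norm {F : Type*} [Field F] [Algebra K F] [FiniteDimensional K F] (x : F) :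
    (1 : MulChar K R) (Algebra.norm K x) = (1 : MulChar F R) x := by
  rcases eq_or_ne x 0 with rfl | hx
  · rw [Algebra.norm_zero, MulChar.map_zero, MulChar.map_zero]
  · rw [MulChar.one_apply hx.isUnit, MulChar.one_apply (Algebra.norm_ne_zero_iff.mpr hx).isUnit]

end JacobiSum

theorem jacobiSum_norm_comparison_general {K F R : Type*} [Field K] [Field F] [Fintype K]
    [Fintype F] [Algebra K F] [CommRing R] [IsDomain R] (χ ψ : MulChar K R) :
    ((χ, ψ) = (1, 1) →
      (∑ x : F, χ (Algebra.norm K x) * ψ (Algebra.norm K (x + 1))) =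
        (Fintype.card K : R) ^ Module.finrank K F - 2 ∧
      (∑ x : K, χ x * ψ (x + 1)) ^ Module.finrank K F =
        ((Fintype.card K : R) - 2) ^ Module.finrank K F) ∧
    ((χ, ψ) ≠ (1, 1) →
      (∑ x : F, χ (Algebra.norm K x) * ψ (Algebra.norm K (x + 1))) =
        (-1) ^ (Module.finrank K F - 1) * (∑ x : K, χ x * ψ (x + 1)) ^ Module.finrank K F) := by
  refine ⟨fun hχψ => ?_, sum_mulChar_norm_eq_neg_one_pow_mul⟩
  obtain ⟨rfl, rfl⟩ := Prod.mk.inj hχψ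
  refine ⟨?_, by rw [sum_one_mulChar_mul_one_mulChar_add_one]⟩
  simp_rw [one_mulChar_norm]
  rw [sum_one_mulChar_mul_one_mulChar_add_one, Module.card_eq_pow_finrank (K := K) (V := F),
    Nat.cast_pow]

/-- Comparison between Jacobi sums over `𝔽_{q^r}` of norm-lifted characters and Jacobi sums
over `𝔽_q`: if `χ = ψ = 1` then `J_{𝔽_{q^r}}(χ∘N, ψ∘N) = q^r - 2` and
`J_{𝔽_q}(χ,ψ)^r = (q-2)^r`; otherwise `J_{𝔽_{q^r}}(χ∘N, ψ∘N) = (-1)^{r-1} J_{𝔽_q}(χ,ψ)^r`.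
Here `J_F(χ,ψ) = ∑_{x ∈ F} χ(x) ψ(x+1)` and `N` is the field norm. -/
theorem jacobiSum_norm_comparison {p n q r : ℕ} (hp : p.Prime) (hn : 1 ≤ n) (hq : q = p ^ n)
    (hr : 2 ≤ r)
    {K F : Type*} [Field K] [Field F] [Fintype K] [Fintype F] [Algebra K F]
    (hK : Fintype.card K = q) (hF : Fintype.card F = q ^ r)
    (χ ψ : MulChar K ℂ) :
    ((χ, ψ) = (1, 1) →
      (∑ x : F, χ (Algebra.norm K x) * ψ (Algebra.norm K (x + 1))) = (q : ℂ) ^ r - 2 ∧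
      (∑ x : K, χ x * ψ (x + 1)) ^ r = ((q : ℂ) - 2) ^ r) ∧
    ((χ, ψ) ≠ (1, 1) →
      (∑ x : F, χ (Algebra.norm K x) * ψ (Algebra.norm K (x + 1))) =
        (-1 : ℂ) ^ (r - 1) * (∑ x : K, χ x * ψ (x + 1)) ^ r) := by
  have hfinrank : Module.finrank K F = r := by
    rw [Module.card_eq_pow_finrank (K := K), hK] at hF
    exact Nat.pow_right_injective (hK ▸ Fintype.one_lt_card) hF
  simpa only [hK, hfinrank] using jacobiSum_norm_comparison_general (F := F) χ ψ
end

section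
/- Let q = p^n be a prime power, r ≥ 2 an integer, k = (q^r − 1)/(q − 1), and 0 ≤ a,b ≤ q−2. Define A_r(a) = −(q−2) if either (r is even and a = 0), or (r is odd, q is even, and a = 0), or (r is odd, q is odd, and a = (q−1)/2), and A_r(a) = 1 otherwise; B(b) = −(q−2) if b = 0 and B(b) = 1 otherwise; C(a,b) = −(q−2) if a = b and C(a,b) = 1 otherwise. Set M_{a,b} = (q^r − 2 + A_r(a) + B(b) + C(a,b))/(q−1)^2. Then |(a,b)_{q−1} − M_{a,b}| ≤ ((q−2)(q−3)/(q−1)^2) · q^{r/2}. -/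
/-!
Count `x ∈ αN` with `x + 1 ∈ βN`, for a subgroup `N` of `Fˣ` of index `e`, by detecting each coset
with the `e` characters of `F` that are trivial on `N`. This turns `e ^ 2` times the count into a
double sum of Jacobi sums weighted by roots of unity. The degenerate pairs, in which one of the two
characters or their product is trivial, have elementary Jacobi sums, and orthogonality adds these up
to the main term exactly. Each of the remaining `(e - 1) * (e - 2)` pairs contributes an error of
absolute value `√|F|`. The main term depends on the coset of `-1`, which for `N = ⟨ω ^ e⟩` is read
off from the parities of `e` and `(|F| - 1) / e`.
-/

open Finset

theorem sum_sum_ite_ne_one {G R : Type*} [Group G] [Fintype G] [DecidableEq G] [CommRing R]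
    (c : R) :
    ∑ x : G, ∑ y : G, (if x ≠ 1 ∧ y ≠ 1 ∧ x * y ≠ 1 then c else 0) =
      (Fintype.card G - 1) * (Fintype.card G - 2) * c := by
  have inner_sum (x : G) (hx : x ≠ 1) :
      ∑ y : G, (if x ≠ 1 ∧ y ≠ 1 ∧ x * y ≠ 1 then c else 0) = (Fintype.card G - 2) * c := by
    have hfilter : ({y : G | x ≠ 1 ∧ y ≠ 1 ∧ x * y ≠ 1} : Finset G) = {1, x⁻¹}ᶜ := by
      ext y
      simp [hx, mul_eq_one_iff_inv_eq, eq_comm (a := y)]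
    have hpair : #({1, x⁻¹} : Finset G) = 2 := card_pair (by simpa [eq_comm] using hx)
    rw [← sum_filter, hfilter, sum_const, nsmul_eq_mul, card_compl, hpair,
      Nat.cast_sub (hpair ▸ card_le_univ _), Nat.cast_ofNat]
  rw [← add_sum_erase _ _ (mem_univ (1 : G)),
    sum_congr rfl fun x hx ↦ inner_sum x (ne_of_mem_erase hx)]
  simp [card_erase_of_mem, Nat.cast_pred Fintype.card_pos, mul_assoc]

section JacobiSum

theorem norm_mulChar_apply_units {R : Type*} [CommRing R] [Finite Rˣ] (χ : MulChar R ℂ) (u : Rˣ) :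
    ‖χ u‖ = 1 := by
  classical
  cases nonempty_fintype Rˣ
  exact Complex.norm_eq_one_of_mem_rootsOfUnity (χ.apply_mem_rootsOfUnity u)

theorem star_jacobiSum {R : Type*} [CommRing R] [Fintype R] (χ φ : MulChar R ℂ) :
    star (jacobiSum χ φ) = jacobiSum χ⁻¹ φ⁻¹ := by
  simp only [jacobiSum, star_sum, star_mul', MulChar.star_apply']

variable {F : Type*} [Field F] [Fintype F]

theorem norm_jacobiSum {χ φ : MulChar F ℂ} (hχ : χ ≠ 1) (hφ : φ ≠ 1) (hχφ : χ * φ ≠ 1) :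
    ‖jacobiSum χ φ‖ = √(Fintype.card F) := by
  have hchar : ringChar ℂ ≠ ringChar F := by
    rw [ringChar.eq_zero]
    exact (CharP.ringChar_ne_zero_of_finite F).symm
  have hsq : ‖jacobiSum χ φ‖ * ‖jacobiSum χ φ‖ = Fintype.card F := by
    rw [← Complex.norm_natCast, ← jacobiSum_mul_jacobiSum_inv hchar hχ hφ hχφ, ← star_jacobiSum,
      norm_mul, norm_star]
  rw [← hsq, Real.sqrt_mul_self (norm_nonneg _)]

open Classical in
/-- The value of `jacobiSum ψ φ` at the degenerate pairs, where `ψ = 1`, `φ = 1` or `ψ * φ = 1`,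
written as one formula that vanishes at all other pairs. -/
noncomputable def jacobiSumDegenerate {R : Type*} [CommRing R] (ψ φ : MulChar F R) : R :=
  (if ψ = 1 ∧ φ = 1 then (Fintype.card F : R) + 1 else 0) - (if φ = 1 then 1 else 0) -
    (if ψ = 1 then 1 else 0) - (if ψ * φ = 1 then ψ (-1) else 0)

theorem jacobiSum_eq_jacobiSumDegenerate {R : Type*} [CommRing R] [IsDomain R] {ψ φ : MulChar F R}
    (h : ψ = 1 ∨ φ = 1 ∨ ψ * φ = 1) : jacobiSum ψ φ = jacobiSumDegenerate ψ φ := by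
  have map_neg_one : (1 : MulChar F R) (-1) = 1 := MulChar.one_apply isUnit_one.neg
  unfold jacobiSumDegenerate
  by_cases hψ : ψ = 1 <;> by_cases hφ : φ = 1
  · simp only [hψ, hφ, jacobiSum_one_one, map_neg_one, mul_one, and_self, if_true]
    ring
  · simp [hψ, hφ, jacobiSum_one_nontrivial hφ]
  · simp [hψ, hφ, jacobiSum_comm ψ 1, jacobiSum_one_nontrivial hψ]
  · obtain rfl : φ = ψ⁻¹ := eq_inv_of_mul_eq_one_right (by tauto)
    simp [hψ, jacobiSum_nontrivial_inv hψ]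

open Classical in
theorem norm_jacobiSum_sub_jacobiSumDegenerate (ψ φ : MulChar F ℂ) :
    ‖jacobiSum ψ φ - jacobiSumDegenerate ψ φ‖ =
      if ψ ≠ 1 ∧ φ ≠ 1 ∧ ψ * φ ≠ 1 then √(Fintype.card F) else 0 := by
  split_ifs with h
  · obtain ⟨hψ, hφ, hψφ⟩ := h
    simp [jacobiSumDegenerate, hψ, hφ, hψφ, norm_jacobiSum]
  · rw [jacobiSum_eq_jacobiSumDegenerate (by tauto), sub_self, norm_zero]

open Classical in
theorem apply_mul_apply_mul_jacobiSumDegenerate {R : Type*} [CommRing R]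
    (ψ φ : MulChar F R) (α β : Fˣ) :
    ψ (-α⁻¹ : Fˣ) * φ (β⁻¹ : Fˣ) * jacobiSumDegenerate ψ φ =
      (if ψ = 1 then (if φ = 1 then (Fintype.card F : R) + 1 else 0) else 0) -
        (if φ = 1 then ψ (-α⁻¹ : Fˣ) else 0) - (if ψ = 1 then φ (β⁻¹ : Fˣ) else 0) -
        (if φ = ψ⁻¹ then ψ (α⁻¹ * β : Fˣ) else 0) := by
  have hinv : ψ * φ = 1 ↔ φ = ψ⁻¹ := by rw [eq_comm (a := φ), inv_eq_iff_mul_eq_one]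
  have hcancel : ψ (-α⁻¹ : Fˣ) * ψ⁻¹ (β⁻¹ : Fˣ) * ψ (-1) = ψ (α⁻¹ * β : Fˣ) := by
    simp [MulChar.inv_apply', ← map_mul]
  simp only [jacobiSumDegenerate, hinv, mul_sub, mul_ite, mul_zero, mul_one, ite_and]
  congr! 5 <;> simp only [*, MulChar.one_apply_coe, one_mul, mul_one]

end JacobiSum

section Subgroup

variable {F : Type*} [Field F]

/-- The coset `αN` of a subgroup `N` of `Fˣ`, as a subset of `F`, so that membership makes sense
for `x + 1` even when it is zero. -/
def unitCoset (N : Subgroup Fˣ) (α : Fˣ) : Set F :=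
  {x | ∃ u : Fˣ, α⁻¹ * u ∈ N ∧ (u : F) = x}

theorem coe_mem_unitCoset {N : Subgroup Fˣ} {α u : Fˣ} :
    (u : F) ∈ unitCoset N α ↔ α⁻¹ * u ∈ N := by
  simp [unitCoset, Units.val_inj]

theorem zero_notMem_unitCoset (N : Subgroup Fˣ) (α : Fˣ) : (0 : F) ∉ unitCoset N α := by
  simp [unitCoset]

/-- The number of `x ∈ αN` with `x + 1 ∈ βN`; for `N = ⟨ω ^ e⟩` these are the cyclotomic numbers
of order `e`. -/
noncomputable def cosetSuccCount (N : Subgroup Fˣ) (α β : Fˣ) : ℕ :=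
  Nat.card {x : F // x ∈ unitCoset N α ∧ x + 1 ∈ unitCoset N β}

variable [Fintype F]

/-- The group of complex characters of `F` that are trivial on `N`, defined as the image of `N`
under the order-reversing duality between subgroups of `Fˣ` and of its character group; its elements
detect membership in the cosets of `N`. -/
noncomputable abbrev charsTrivialOn (N : Subgroup Fˣ) : Subgroup (MulChar F ℂ) :=
  (MulChar.subgroupOrderIsoSubgroupMulChar F ℂ N).ofDual

theorem natCard_charsTrivialOn (N : Subgroup Fˣ) : Nat.card (charsTrivialOn N) = N.index :=
  MulChar.card_subgroupOrderIsoSubgroupMulChar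

theorem forall_mem_charsTrivialOn_iff {N : Subgroup Fˣ} {u : Fˣ} :
    (∀ ψ ∈ charsTrivialOn N, ψ u = 1) ↔ u ∈ N := by
  have hmem := MulChar.mem_subgroupOrderIsoSubgroupMulChar_symm_iff (X := charsTrivialOn N) (m := u)
  simpa using hmem.symm

open Classical in
theorem sum_charsTrivialOn_apply_units (N : Subgroup Fˣ) [Fintype (charsTrivialOn N)] (u : Fˣ) :
    ∑ ψ : charsTrivialOn N, (ψ : MulChar F ℂ) u = if u ∈ N then (N.index : ℂ) else 0 := by
  let evalAt : charsTrivialOn N →* ℂ :=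
    ((MulChar.mulCharEquiv F ℂ).symm u).toMonoidHom.domRestrict (charsTrivialOn N)
  have evalAt_apply (ψ : charsTrivialOn N) : evalAt ψ = (ψ : MulChar F ℂ) u :=
    MulChar.mulCharEquiv_symm_apply_apply u _
  have evalAt_eq_one_iff : evalAt = 1 ↔ u ∈ N := by
    rw [← forall_mem_charsTrivialOn_iff, DFunLike.ext_iff, Subtype.forall]
    simp only [evalAt_apply, MonoidHom.one_apply]
  have hsum := sum_hom_units evalAt
  simpa only [evalAt_apply, evalAt_eq_one_iff, ← Nat.card_eq_fintype_card, natCard_charsTrivialOn,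
    Nat.cast_ite, Nat.cast_zero] using hsum

open Classical in
theorem sum_charsTrivialOn_inv_mul_apply (N : Subgroup Fˣ) [Fintype (charsTrivialOn N)]
    (α : Fˣ) (x : F) :
    ∑ ψ : charsTrivialOn N, (ψ : MulChar F ℂ) ((α⁻¹ : Fˣ) * x) =
      if x ∈ unitCoset N α then (N.index : ℂ) else 0 := by
  rcases eq_or_ne x 0 with rfl | hx
  · simp [zero_notMem_unitCoset, MulChar.map_zero]
  · lift x to Fˣ using hx.isUnit
    simp only [← Units.val_mul, sum_charsTrivialOn_apply_units, coe_mem_unitCoset]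

theorem index_sq_mul_cosetSuccCount (N : Subgroup Fˣ) [Fintype (charsTrivialOn N)] (α β : Fˣ) :
    (N.index : ℂ) ^ 2 * cosetSuccCount N α β =
      ∑ ψ : charsTrivialOn N, ∑ φ : charsTrivialOn N, (ψ : MulChar F ℂ) (-α⁻¹ : Fˣ) *
        (φ : MulChar F ℂ) (β⁻¹ : Fˣ) * jacobiSum (ψ : MulChar F ℂ) (φ : MulChar F ℂ) := by
  classical
  calc (N.index : ℂ) ^ 2 * cosetSuccCount N α β
      = ∑ x : F, (if x ∈ unitCoset N α then (N.index : ℂ) else 0) *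
          (if x + 1 ∈ unitCoset N β then (N.index : ℂ) else 0) := by
        simp only [ite_zero_mul_ite_zero, ← sum_filter, sum_const, nsmul_eq_mul]
        rw [cosetSuccCount, Nat.subtype_card _ mem_filter_univ, sq, mul_comm]
    _ = ∑ x : F, (∑ ψ : charsTrivialOn N, (ψ : MulChar F ℂ) ((α⁻¹ : Fˣ) * -x)) *
          ∑ φ : charsTrivialOn N, (φ : MulChar F ℂ) ((β⁻¹ : Fˣ) * (-x + 1)) := by
        simp only [sum_charsTrivialOn_inv_mul_apply]
        exact (Equiv.sum_comp (Equiv.neg F) _).symm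
    _ = ∑ ψ : charsTrivialOn N, ∑ φ : charsTrivialOn N, (ψ : MulChar F ℂ) (-α⁻¹ : Fˣ) *
          (φ : MulChar F ℂ) (β⁻¹ : Fˣ) * jacobiSum (ψ : MulChar F ℂ) (φ : MulChar F ℂ) := by
        simp only [sum_mul_sum]
        rw [sum_comm]
        refine sum_congr rfl fun ψ _ ↦ ?_
        rw [sum_comm]
        refine sum_congr rfl fun φ _ ↦ ?_
        rw [jacobiSum, mul_sum]
        refine sum_congr rfl fun x _ ↦ ?_
        rw [mul_neg, ← neg_mul, ← Units.val_neg, neg_add_eq_sub, map_mul, map_mul,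
          mul_mul_mul_comm]

open Classical in
theorem sum_sum_apply_mul_apply_mul_jacobiSumDegenerate (N : Subgroup Fˣ)
    [Fintype (charsTrivialOn N)] (α β : Fˣ) :
    ∑ ψ : charsTrivialOn N, ∑ φ : charsTrivialOn N, (ψ : MulChar F ℂ) (-α⁻¹ : Fˣ) *
        (φ : MulChar F ℂ) (β⁻¹ : Fˣ) * jacobiSumDegenerate (ψ : MulChar F ℂ) (φ : MulChar F ℂ) =
      Fintype.card F + 1 - (if -α⁻¹ ∈ N then (N.index : ℂ) else 0) -
        (if β⁻¹ ∈ N then (N.index : ℂ) else 0) -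
        (if α⁻¹ * β ∈ N then (N.index : ℂ) else 0) := by
  have sum_ite_one (f : charsTrivialOn N → ℂ) :
      ∑ ψ : charsTrivialOn N, ∑ φ, (if ψ = 1 then f φ else 0) = ∑ φ, f φ := by
    rw [sum_comm]
    simp only [sum_ite_eq', mem_univ, if_true]
  simp only [← sum_charsTrivialOn_apply_units, apply_mul_apply_mul_jacobiSumDegenerate,
    sum_sub_distrib, ← InvMemClass.coe_inv, OneMemClass.coe_eq_one, Subtype.coe_inj, sum_ite_one,
    sum_ite_eq', mem_univ, if_true]

open Classical in
theorem abs_index_sq_mul_cosetSuccCount_sub_le (N : Subgroup Fˣ) (α β : Fˣ) :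
    |(N.index : ℝ) ^ 2 * cosetSuccCount N α β -
        (Fintype.card F + 1 - (if -α⁻¹ ∈ N then (N.index : ℝ) else 0) -
          (if β⁻¹ ∈ N then (N.index : ℝ) else 0) -
          (if α⁻¹ * β ∈ N then (N.index : ℝ) else 0))| ≤
      (N.index - 1) * (N.index - 2) * √(Fintype.card F) := by
  cases nonempty_fintype (charsTrivialOn N)
  have norm_term (ψ φ : charsTrivialOn N) :
      ‖(ψ : MulChar F ℂ) (-α⁻¹ : Fˣ) * (φ : MulChar F ℂ) (β⁻¹ : Fˣ) *
        (jacobiSum (ψ : MulChar F ℂ) φ - jacobiSumDegenerate (ψ : MulChar F ℂ) φ)‖ =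
      if ψ ≠ 1 ∧ φ ≠ 1 ∧ ψ * φ ≠ 1 then √(Fintype.card F) else 0 := by
    rw [norm_mul, norm_mul, norm_mulChar_apply_units, norm_mulChar_apply_units, one_mul, one_mul,
      norm_jacobiSum_sub_jacobiSumDegenerate]
    simp only [ne_eq, ← MulMemClass.coe_mul, OneMemClass.coe_eq_one]
  calc _ = ‖∑ ψ : charsTrivialOn N, ∑ φ : charsTrivialOn N,
          (ψ : MulChar F ℂ) (-α⁻¹ : Fˣ) * (φ : MulChar F ℂ) (β⁻¹ : Fˣ) *
            (jacobiSum (ψ : MulChar F ℂ) φ - jacobiSumDegenerate (ψ : MulChar F ℂ) φ)‖ := by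
        simp only [mul_sub, sum_sub_distrib]
        rw [← index_sq_mul_cosetSuccCount, sum_sum_apply_mul_apply_mul_jacobiSumDegenerate,
          ← Real.norm_eq_abs, ← Complex.norm_real]
        push_cast [apply_ite Complex.ofReal]
        rfl
    _ ≤ ∑ ψ : charsTrivialOn N, ∑ φ : charsTrivialOn N,
          if ψ ≠ 1 ∧ φ ≠ 1 ∧ ψ * φ ≠ 1 then √(Fintype.card F) else 0 := by
        simp only [← norm_term]
        exact norm_sum_le_of_le _ fun ψ _ ↦ norm_sum_le _ _
    _ = (N.index - 1) * (N.index - 2) * √(Fintype.card F) := by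
        rw [sum_sum_ite_ne_one, ← Nat.card_eq_fintype_card, natCard_charsTrivialOn]

end Subgroup

theorem zpow_mem_zpowers_pow_iff {G : Type*} [Group G] {g : G} {e : ℕ} (he : e ∣ orderOf g)
    {i : ℤ} : g ^ i ∈ Subgroup.zpowers (g ^ e) ↔ (e : ℤ) ∣ i := by
  constructor
  · intro h
    obtain ⟨j, hj⟩ := Subgroup.mem_zpowers_iff.mp h
    rw [← zpow_natCast, ← zpow_mul, ← orderOf_dvd_sub_iff_zpow_eq_zpow] at hj
    exact (dvd_sub_right (dvd_mul_right _ j)).mp ((Int.natCast_dvd_natCast.mpr he).trans hj)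
  · rintro ⟨j, rfl⟩
    exact ⟨j, by rw [zpow_mul, zpow_natCast]⟩

theorem index_zpowers_pow {G : Type*} [Group G] [Finite G] {g : G}
    (hg : ∀ x, x ∈ Subgroup.zpowers g) {e : ℕ} (he : e ∣ orderOf g) :
    (Subgroup.zpowers (g ^ e)).index = e := by
  have horder : orderOf g = e * orderOf (g ^ e) := by
    rw [orderOf_pow_of_dvd (ne_zero_of_dvd_ne_zero (orderOf_pos g).ne' he) he,
      Nat.mul_div_cancel' he]
  have hmul := (Subgroup.zpowers (g ^ e)).index_mul_card
  rw [Nat.card_zpowers, ← orderOf_eq_card_of_forall_mem_zpowers hg, horder] at hmul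
  exact Nat.eq_of_mul_eq_mul_right (orderOf_pos _) hmul

section Cyclotomic

variable {F : Type*} [Field F] [Finite F] {ω : Fˣ} {e : ℕ}

theorem inCycCoset_iff_mem_zpowers {a : ℕ} {x : Fˣ} :
    InCycCoset ω e a x ↔ (ω ^ a)⁻¹ * x ∈ Subgroup.zpowers (ω ^ e) := by
  rw [← mem_powers_iff_mem_zpowers, Submonoid.mem_powers_iff, InCycCoset]
  simp only [eq_inv_mul_iff_mul_eq, eq_comm]

theorem inCycCoset_pow_iff (he : e ∣ orderOf ω) {a j : ℕ} :
    InCycCoset ω e a (ω ^ j) ↔ a ≡ j [MOD e] := by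
  have hzpow : (ω ^ a)⁻¹ * ω ^ j = ω ^ ((j : ℤ) - a) := by
    rw [sub_eq_neg_add, zpow_add, zpow_neg, zpow_natCast, zpow_natCast]
  rw [inCycCoset_iff_mem_zpowers, hzpow, zpow_mem_zpowers_pow_iff he, Nat.modEq_iff_dvd]

theorem cycNum_eq_cosetSuccCount (a b : ℕ) :
    cycNum ω e a b = cosetSuccCount (Subgroup.zpowers (ω ^ e)) (ω ^ a) (ω ^ b) := by
  rw [cycNum, cosetSuccCount, Nat.card_coe_set_eq,
    ← Set.ncard_image_of_injective _ (Units.val_injective (α := F))]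
  refine congrArg Set.ncard (Set.ext fun x ↦ ?_)
  simp only [unitCoset, inCycCoset_iff_mem_zpowers]
  constructor
  · rintro ⟨u, ⟨hu, v, hv, huv⟩, rfl⟩
    exact ⟨⟨u, hu, rfl⟩, v, hv, huv⟩
  · rintro ⟨⟨u, hu, rfl⟩, v, hv, huv⟩
    exact ⟨u, ⟨hu, v, hv, huv⟩, rfl⟩

end Cyclotomic

section NegOne

variable {F : Type*} [Field F] [Fintype F] {ω : Fˣ}

theorem orderOf_eq_card_sub_one (hω : ∀ x : Fˣ, x ∈ Subgroup.zpowers ω) :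
    orderOf ω = Fintype.card F - 1 := by
  classical
  rw [orderOf_eq_card_of_forall_mem_zpowers hω, Nat.card_eq_fintype_card, Fintype.card_units]

theorem neg_one_eq_pow_of_card_eq (hω : ∀ x : Fˣ, x ∈ Subgroup.zpowers ω) {m : ℕ}
    (hcard : Fintype.card F = 2 * m + 1) : -1 = ω ^ m := by
  have horder : orderOf ω = 2 * m := by rw [orderOf_eq_card_sub_one hω, hcard, Nat.add_sub_cancel]
  have hm : m ≠ 0 := by
    rintro rfl
    exact (Fintype.one_lt_card (α := F)).ne' hcard
  have hsq : ((ω ^ m : Fˣ) : F) ^ 2 = 1 := by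
    rw [← Units.val_pow_eq_pow_val, ← pow_mul, mul_comm, ← horder, pow_orderOf_eq_one,
      Units.val_one]
  have hne : ω ^ m ≠ 1 := pow_ne_one_of_lt_orderOf hm (by lia)
  exact Units.ext ((sq_eq_one_iff.mp hsq).resolve_left fun h ↦ hne (Units.ext h)).symm

theorem inCycCoset_neg_one_iff (hω : ∀ x : Fˣ, x ∈ Subgroup.zpowers ω) {e k a : ℕ}
    (hcard : Fintype.card F = e * k + 1) (ha : a < e) :
    InCycCoset ω e a (-1) ↔ a = if Even e ∧ Odd k then e / 2 else 0 := by
  have hdvd : e ∣ orderOf ω := by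
    rw [orderOf_eq_card_sub_one hω, hcard, Nat.add_sub_cancel]
    exact dvd_mul_right e k
  have eq_of_neg_one_eq_pow {j i : ℕ} (hj : -1 = ω ^ j) (hi : i < e) (hij : i ≡ j [MOD e]) :
      InCycCoset ω e a (-1) ↔ a = i := by
    rw [hj, inCycCoset_pow_iff hdvd]
    exact ⟨fun h ↦ (h.trans hij.symm).eq_of_lt_of_lt ha hi, fun h ↦ h ▸ hij⟩
  split_ifs with hparity
  · obtain ⟨⟨d, rfl⟩, m, rfl⟩ := hparity
    have hpow : -1 = ω ^ (d + (d + d) * m) := neg_one_eq_pow_of_card_eq hω (by rw [hcard]; ring)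
    have hhalf : (d + d) / 2 = d := by lia
    exact eq_of_neg_one_eq_pow hpow (by lia) (by simp [hhalf, Nat.ModEq])
  · rcases Nat.even_or_odd k with ⟨m, rfl⟩ | hk
    · have hpow : -1 = ω ^ (e * m) := neg_one_eq_pow_of_card_eq hω (by rw [hcard]; ring)
      exact eq_of_neg_one_eq_pow hpow (by lia) (by simp [Nat.ModEq])
    · have he : Odd e := Nat.not_even_iff_odd.mp fun he ↦ hparity ⟨he, hk⟩
      have hneg : (-1 : F) = 1 := by
        rw [neg_one_eq_one_iff, FiniteField.even_card_iff_char_two, hcard, ← Nat.even_iff]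
        exact (he.mul hk).add_one
      exact eq_of_neg_one_eq_pow (j := 0) (Units.ext (by simpa)) (by lia) rfl

end NegOne

theorem cycNum_main_term_estimate_general {F : Type*} [Field F] [Fintype F] {ω : Fˣ}
    (hω : ∀ x : Fˣ, x ∈ Subgroup.zpowers ω) {e k : ℕ} (hcard : Fintype.card F = e * k + 1)
    {a b : ℕ} (ha : a < e) (hb : b < e) :
    |(cycNum ω e a b : ℝ) -
        (Fintype.card F - 2 +
          (if a = if Even e ∧ Odd k then e / 2 else 0 then -((e : ℝ) - 1) else 1) +
          (if b = 0 then -((e : ℝ) - 1) else 1) +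
          (if a = b then -((e : ℝ) - 1) else 1)) / (e : ℝ) ^ 2| ≤
      ((e : ℝ) - 1) * ((e : ℝ) - 2) / (e : ℝ) ^ 2 * √(Fintype.card F) := by
  have hdvd : e ∣ orderOf ω := by
    rw [orderOf_eq_card_sub_one hω, hcard, Nat.add_sub_cancel]
    exact dvd_mul_right e k
  have mem_iff_neg : -(ω ^ a)⁻¹ ∈ Subgroup.zpowers (ω ^ e) ↔
      a = if Even e ∧ Odd k then e / 2 else 0 := by
    rw [← inCycCoset_neg_one_iff hω hcard ha, inCycCoset_iff_mem_zpowers, mul_neg_one]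
  have mem_iff_zero : (ω ^ b)⁻¹ ∈ Subgroup.zpowers (ω ^ e) ↔ b = 0 := by
    rw [← mul_one (ω ^ b)⁻¹, ← inCycCoset_iff_mem_zpowers, ← pow_zero ω, inCycCoset_pow_iff hdvd]
    exact ⟨fun h ↦ h.eq_of_lt_of_lt hb (by lia), fun h ↦ h ▸ rfl⟩
  have mem_iff_eq : (ω ^ a)⁻¹ * ω ^ b ∈ Subgroup.zpowers (ω ^ e) ↔ a = b := by
    rw [← inCycCoset_iff_mem_zpowers, inCycCoset_pow_iff hdvd]
    exact ⟨fun h ↦ h.eq_of_lt_of_lt ha hb, fun h ↦ h ▸ rfl⟩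
  have hbound := abs_index_sq_mul_cosetSuccCount_sub_le (Subgroup.zpowers (ω ^ e)) (ω ^ a) (ω ^ b)
  simp only [index_zpowers_pow hω hdvd, ← cycNum_eq_cosetSuccCount, mem_iff_neg, mem_iff_zero,
    mem_iff_eq] at hbound
  have he : 0 < (e : ℝ) ^ 2 := pow_pos (Nat.cast_pos.mpr (by lia)) 2
  have ite_eq_one_sub (P : Prop) [Decidable P] :
      (if P then -((e : ℝ) - 1) else 1) = 1 - if P then (e : ℝ) else 0 := by
    split_ifs <;> ring
  simp only [ite_eq_one_sub]
  rw [sub_div' he.ne', abs_div, abs_of_pos he, div_mul_eq_mul_div]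
  gcongr
  refine le_of_eq_of_le (congrArg abs ?_) hbound
  ring

theorem even_sub_one_and_odd_geomSum_iff {q r : ℕ} (hq : 0 < q) :
    Even (q - 1) ∧ Odd (∑ i ∈ range r, q ^ i) ↔ Odd q ∧ Odd r := by
  have heven : Even (q - 1) ↔ Odd q := by grind
  rw [heven, and_congr_right_iff]
  intro hodd
  simp [odd_sum_iff_odd_card_odd, hodd.pow]

theorem sqrt_pow_eq_rpow_half {x : ℝ} (hx : 0 ≤ x) (r : ℕ) : √(x ^ r) = x ^ ((r : ℝ) / 2) := by
  rw [Real.sqrt_eq_rpow, ← Real.rpow_natCast_mul hx, mul_one_div]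

open Classical in
/-- The cyclotomic number `(a,b)_{q-1}` equals the main term
`M_{a,b} = (q^r - 2 + A_r(a) + B(b) + C(a,b))/(q-1)^2` up to an error of absolute value at
most `((q-2)(q-3)/(q-1)^2) q^{r/2}`. -/
theorem cycNum_main_term_estimate {p n q r k : ℕ} (hp : p.Prime) (hn : 1 ≤ n) (hq : q = p ^ n)
    (hr : 2 ≤ r) (hk : k = (q ^ r - 1) / (q - 1))
    {F : Type*} [Field F] [Fintype F] (hF : Fintype.card F = q ^ r)
    (ω : Fˣ) (hω : ∀ x : Fˣ, x ∈ Subgroup.zpowers ω)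
    (a b : ℕ) (ha : a ≤ q - 2) (hb : b ≤ q - 2) :
    |(cycNum ω (q - 1) a b : ℝ) -
        ((q : ℝ) ^ r - 2 +
          (if (Even r ∧ a = 0) ∨ (Odd r ∧ Even q ∧ a = 0) ∨
              (Odd r ∧ Odd q ∧ a = (q - 1) / 2) then -((q : ℝ) - 2) else 1) +
          (if b = 0 then -((q : ℝ) - 2) else 1) +
          (if a = b then -((q : ℝ) - 2) else 1)) / ((q : ℝ) - 1) ^ 2| ≤
      ((q : ℝ) - 2) * ((q : ℝ) - 3) / ((q : ℝ) - 1) ^ 2 * (q : ℝ) ^ ((r : ℝ) / 2) := by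
  have hq2 : 2 ≤ q := hq ▸ Nat.one_lt_pow (by lia) hp.one_lt
  have hcard : Fintype.card F = (q - 1) * ∑ i ∈ range r, q ^ i + 1 := by
    rw [hF, mul_comm, geom_sum_mul_of_one_le (by lia),
      Nat.sub_add_cancel (Nat.one_le_pow r q (by lia))]
  have hA : (a = if Even (q - 1) ∧ Odd (∑ i ∈ range r, q ^ i) then (q - 1) / 2 else 0) ↔
      (Even r ∧ a = 0) ∨ (Odd r ∧ Even q ∧ a = 0) ∨ (Odd r ∧ Odd q ∧ a = (q - 1) / 2) := by
    simp only [even_sub_one_and_odd_geomSum_iff (q := q) (r := r) (by lia)]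
    grind
  have hbound := cycNum_main_term_estimate_general hω hcard (a := a) (b := b) (by lia) (by lia)
  have hsub_two : (q : ℝ) - 1 - 1 = q - 2 := by ring
  have hsub_three : (q : ℝ) - 1 - 2 = q - 3 := by ring
  simpa only [hA, hF, Nat.cast_pow, sqrt_pow_eq_rpow_half q.cast_nonneg,
    Nat.cast_pred (by lia : 0 < q), hsub_two, hsub_three] using hbound
end
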